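/- arXiv:1312.2185 — 2 statements merged into one kernel-verified Lean document; each statement's English description precedes it below -/
import Mathlib

section
/- Let k ≥ 2 and let G = (U, V, E) be a path-restricted ordered bipartite graph in which every forward path has at most k edges. Then G has at most k·(|U| + |V|) edges. -/
open List

/-- Adjacency relation of the bipartite graph with edge set `E ⊆ U × V`,
on the disjoint union of the two sides. -/
def BipAdj {α β : Type*} (E : Set (α × β)) : (α ⊕ β) → (α ⊕ β) → Prop
  | Sum.inl u, Sum.inr v => (u, v) ∈ E
  | Sum.inr v, Sum.inl u => (u, v) ∈ E
  | _, _ => False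

/-- The `U`-vertices visited by a walk, in order of traversal. -/
def uVerts {α β : Type*} (ws : List (α ⊕ β)) : List α := ws.filterMap Sum.getLeft?

/-- The `V`-vertices visited by a walk, in order of traversal. -/
def vVerts {α β : Type*} (ws : List (α ⊕ β)) : List β := ws.filterMap Sum.getRight?

/-- A (nonempty, simple) path in the bipartite graph with edge set `E`. -/
def IsPathList {α β : Type*} (E : Set (α × β)) (ws : List (α ⊕ β)) : Prop :=
  ws ≠ [] ∧ ws.Chain' (BipAdj E) ∧ ws.Nodup

/-- A forward path: a path whose `U`-vertices and `V`-vertices are both visited in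
strictly increasing order, or both in strictly decreasing order. -/
def IsForwardPath {α β : Type*} [Preorder α] [Preorder β]
    (E : Set (α × β)) (ws : List (α ⊕ β)) : Prop :=
  IsPathList E ws ∧
    (((uVerts ws).Chain' (· < ·) ∧ (vVerts ws).Chain' (· < ·)) ∨
      ((uVerts ws).Chain' (· > ·) ∧ (vVerts ws).Chain' (· > ·)))

/-- The internal (degree-two) vertices of a path: all but the two endpoints. -/
def internalVerts {α β : Type*} (ws : List (α ⊕ β)) : List (α ⊕ β) := (ws.drop 1).dropLast

/-- `x` is a least element of the list `l`. -/
def ListLeast {γ : Type*} [Preorder γ] (l : List γ) (x : γ) : Prop :=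
  x ∈ l ∧ ∀ y ∈ l, x ≤ y

/-- `x` is a greatest element of the list `l`. -/
def ListGreatest {γ : Type*} [Preorder γ] (l : List γ) (x : γ) : Prop :=
  x ∈ l ∧ ∀ y ∈ l, y ≤ x

/-- The forward path `ws` has a back edge: an edge of `G` joining the smallest
`U`-vertex `u_a` of `ws` to a vertex `v_j ∈ [v_c, v_d]` strictly greater than the smallest
internal `V`-vertex of `ws`, or an edge joining the smallest `V`-vertex `v_c` of `ws` to a
vertex `u_i ∈ [u_a, u_b]` strictly greater than the smallest internal `U`-vertex of `ws`. -/
def HasBackEdge {α β : Type*} [Preorder α] [Preorder β]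
    (E : Set (α × β)) (ws : List (α ⊕ β)) : Prop :=
  (∃ ua vc vd vint vj,
      ListLeast (uVerts ws) ua ∧ ListLeast (vVerts ws) vc ∧ ListGreatest (vVerts ws) vd ∧
      ListLeast (vVerts (internalVerts ws)) vint ∧
      (ua, vj) ∈ E ∧ vc ≤ vj ∧ vj ≤ vd ∧ vint < vj) ∨
  (∃ vc ua ub uint ui,
      ListLeast (vVerts ws) vc ∧ ListLeast (uVerts ws) ua ∧ ListGreatest (uVerts ws) ub ∧
      ListLeast (uVerts (internalVerts ws)) uint ∧
      (ui, vc) ∈ E ∧ ua ≤ ui ∧ ui ≤ ub ∧ uint < ui)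

/-- A path-restricted ordered bipartite graph: no forward path has a back edge. -/
def IsPRBG {α β : Type*} [Preorder α] [Preorder β] (E : Set (α × β)) : Prop :=
  ∀ ws : List (α ⊕ β), IsForwardPath E ws → ¬ HasBackEdge E ws

/-!
Call an edge extremal if it is the largest edge at one of its two ends. At most `|U| + |V|` edges
are extremal, and deleting all of them shortens the longest decreasing path: if such a path starts
with the non-extremal edge `xy`, then `x` has a neighbour `z > y`, and `z` can be put in front of
the path. The bound follows by induction on `k`.
-/

section Paths

variable {α β : Type*} {E F : Set (α × β)}

/-- A path whose `U`-vertices and `V`-vertices are both visited in strictly decreasing order, for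
linearly ordered sides. The order on `α ⊕ β` is that of the disjoint sum, in which vertices of
different sides are incomparable, so one condition covers both sides and makes the vertices
distinct. -/
structure IsDecreasingPath [LE α] [LE β] (E : Set (α × β)) (ws : List (α ⊕ β)) : Prop where
  ne_nil : ws ≠ []
  isChain : ws.IsChain (BipAdj E)
  pairwise_not_le : ws.Pairwise fun x y => ¬ x ≤ y

theorem BipAdj.mono (hEF : E ⊆ F) {x y : α ⊕ β} (h : BipAdj E x y) : BipAdj F x y := by
  rcases x with u | v <;> rcases y with u' | v'
  exacts [h, hEF h, hEF h, h]

theorem BipAdj.symm {x y : α ⊕ β} (h : BipAdj E x y) : BipAdj E y x := by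
  rcases x with u | v <;> rcases y with u' | v' <;> exact h

theorem BipAdj.not_le [LE α] [LE β] {x y : α ⊕ β} (h : BipAdj E x y) : ¬ x ≤ y := by
  rcases x with u | v <;> rcases y with u' | v'
  exacts [h.elim, Sum.not_inl_le_inr, Sum.not_inr_le_inl, h.elim]

theorem IsDecreasingPath.mono [LE α] [LE β] (hEF : E ⊆ F) {ws : List (α ⊕ β)}
    (h : IsDecreasingPath E ws) : IsDecreasingPath F ws :=
  ⟨h.ne_nil, h.isChain.imp fun _ _ => BipAdj.mono hEF, h.pairwise_not_le⟩

theorem BipAdj.isDecreasingPath_pair [LE α] [LE β] {x y : α ⊕ β} (h : BipAdj E x y) :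
    IsDecreasingPath E [x, y] :=
  ⟨List.cons_ne_nil _ _, List.isChain_pair.2 h, List.pairwise_pair.2 h.not_le⟩

theorem IsDecreasingPath.cons [Preorder α] [Preorder β] {x y z : α ⊕ β} {ws : List (α ⊕ β)}
    (h : IsDecreasingPath E (x :: y :: ws)) (hzx : BipAdj E z x) (hyz : y < z) :
    IsDecreasingPath E (z :: x :: y :: ws) := by
  refine ⟨List.cons_ne_nil _ _, h.isChain.cons_cons hzx,
    List.pairwise_cons.2 ⟨?_, h.pairwise_not_le⟩⟩
  have y_not_le : ∀ w ∈ ws, ¬ y ≤ w := fun _ =>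
    List.rel_of_pairwise_cons h.pairwise_not_le.of_cons
  simp only [List.forall_mem_cons]
  exact ⟨hzx.not_le, hyz.not_ge, fun w hw hzw => y_not_le w hw (hyz.le.trans hzw)⟩

theorem IsDecreasingPath.isForwardPath [LinearOrder α] [LinearOrder β] {ws : List (α ⊕ β)}
    (h : IsDecreasingPath E ws) : IsForwardPath E ws := by
  have nodup : ws.Nodup := h.pairwise_not_le.imp fun hxy => mt le_of_eq hxy
  have uVerts_decreasing : (uVerts ws).Pairwise (· > ·) := by
    refine h.pairwise_not_le.filterMap _ fun x y hxy u hu u' hu' => ?_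
    rw [Sum.getLeft?_eq_some_iff.1 hu, Sum.getLeft?_eq_some_iff.1 hu', Sum.inl_le_inl_iff] at hxy
    exact not_le.1 hxy
  have vVerts_decreasing : (vVerts ws).Pairwise (· > ·) := by
    refine h.pairwise_not_le.filterMap _ fun x y hxy v hv v' hv' => ?_
    rw [Sum.getRight?_eq_some_iff.1 hv, Sum.getRight?_eq_some_iff.1 hv', Sum.inr_le_inr_iff] at hxy
    exact not_le.1 hxy
  exact ⟨⟨h.ne_nil, h.isChain, nodup⟩,
    Or.inr ⟨uVerts_decreasing.isChain, vVerts_decreasing.isChain⟩⟩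

end Paths

section ExtremalEdges

variable {α β : Type*}

/-- The edges `(u, v)` in which `u` is the greatest neighbour of `v`; there is at most one such
edge for every `v`. -/
def greatestLeftEdges [LE α] (E : Set (α × β)) : Set (α × β) :=
  {p ∈ E | ∀ u, (u, p.2) ∈ E → u ≤ p.1}

/-- The edges `(u, v)` in which `v` is the greatest neighbour of `u`; there is at most one such
edge for every `u`. -/
def greatestRightEdges [LE β] (E : Set (α × β)) : Set (α × β) :=
  {p ∈ E | ∀ v, (p.1, v) ∈ E → v ≤ p.2}

/-- The edges that are not the greatest edge at either of their ends: what is left of the graph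
after one step of the induction on the length of decreasing paths. -/
def nonextremalEdges [LE α] [LE β] (E : Set (α × β)) : Set (α × β) :=
  E \ (greatestLeftEdges E ∪ greatestRightEdges E)

theorem nonextremalEdges_subset [LE α] [LE β] (E : Set (α × β)) : nonextremalEdges E ⊆ E :=
  Set.sdiff_subset

theorem encard_greatestLeftEdges_le [PartialOrder α] (E : Set (α × β)) :
    (greatestLeftEdges E).encard ≤ (Prod.snd '' E).encard := by
  refine Set.encard_le_encard_of_injOn (fun p hp => Set.mem_image_of_mem _ hp.1) ?_
  rintro ⟨u, v⟩ ⟨huv, hu⟩ ⟨u', _⟩ ⟨huv', hu'⟩ rfl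
  exact Prod.ext (le_antisymm (hu' u huv) (hu u' huv')) rfl

theorem encard_greatestRightEdges_le [PartialOrder β] (E : Set (α × β)) :
    (greatestRightEdges E).encard ≤ (Prod.fst '' E).encard := by
  refine Set.encard_le_encard_of_injOn (fun p hp => Set.mem_image_of_mem _ hp.1) ?_
  rintro ⟨u, v⟩ ⟨huv, hv⟩ ⟨_, v'⟩ ⟨huv', hv'⟩ rfl
  exact Prod.ext rfl (le_antisymm (hv' v huv) (hv v' huv'))

theorem encard_le_encard_nonextremalEdges_add [PartialOrder α] [PartialOrder β]
    (E : Set (α × β)) :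
    E.encard ≤
      (nonextremalEdges E).encard + ((Prod.fst '' E).encard + (Prod.snd '' E).encard) := by
  calc E.encard
      ≤ (nonextremalEdges E).encard + (greatestLeftEdges E ∪ greatestRightEdges E).encard :=
        Set.encard_le_encard_sdiff_add_encard _ _
    _ ≤ (nonextremalEdges E).encard +
          ((greatestLeftEdges E).encard + (greatestRightEdges E).encard) := by
        gcongr
        exact Set.encard_union_le _ _
    _ ≤ (nonextremalEdges E).encard + ((Prod.fst '' E).encard + (Prod.snd '' E).encard) := by
        rw [add_comm (greatestLeftEdges E).encard]
        gcongr
        exacts [encard_greatestRightEdges_le E, encard_greatestLeftEdges_le E]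

variable [LinearOrder α] [LinearOrder β] {E : Set (α × β)}

theorem exists_gt_bipAdj_of_bipAdj_nonextremalEdges {x y : α ⊕ β}
    (h : BipAdj (nonextremalEdges E) x y) : ∃ z, y < z ∧ BipAdj E x z := by
  rcases x with u | v <;> rcases y with u' | v'
  · exact h.elim
  · by_contra! hmax
    exact h.2 (Or.inr ⟨h.1, fun w hw => not_lt.1 fun hlt => hmax (.inr w) (by simpa) hw⟩)
  · by_contra! hmax
    exact h.2 (Or.inl ⟨h.1, fun w hw => not_lt.1 fun hlt => hmax (.inl w) (by simpa) hw⟩)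
  · exact h.elim

theorem length_le_of_isDecreasingPath_nonextremalEdges {k : ℕ}
    (hE : ∀ ws, IsDecreasingPath E ws → ws.length ≤ k + 2) {ws : List (α ⊕ β)}
    (hws : IsDecreasingPath (nonextremalEdges E) ws) : ws.length ≤ k + 1 := by
  match ws with
  | [] | [_] => simp
  | x :: y :: r =>
    obtain ⟨z, hyz, hxz⟩ :=
      exists_gt_bipAdj_of_bipAdj_nonextremalEdges (List.isChain_cons_cons.1 hws.isChain).1
    have extended := (hws.mono (nonextremalEdges_subset E)).cons hxz.symm hyz
    exact Nat.le_of_succ_le_succ (hE _ extended)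

end ExtremalEdges

theorem prbg_bounded_path_length_edges_general {α β : Type*} [LinearOrder α] [LinearOrder β]
    (E : Set (α × β)) (k : ℕ)
    (hpath : ∀ ws : List (α ⊕ β), IsDecreasingPath E ws → ws.length ≤ k + 1) :
    E.encard ≤ k * ((Prod.fst '' E).encard + (Prod.snd '' E).encard) := by
  induction k generalizing E with
  | zero =>
    have no_edge : E = ∅ := by
      refine Set.eq_empty_of_forall_notMem fun ⟨u, v⟩ huv => ?_
      have edge : BipAdj E (.inl u) (.inr v) := huv
      exact absurd (hpath _ edge.isDecreasingPath_pair) (by simp)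
    simp [no_edge]
  | succ k ih =>
    have remaining := ih (nonextremalEdges E) fun ws hws =>
      length_le_of_isDecreasingPath_nonextremalEdges hpath hws
    calc E.encard
        ≤ (nonextremalEdges E).encard + ((Prod.fst '' E).encard + (Prod.snd '' E).encard) :=
          encard_le_encard_nonextremalEdges_add E
      _ ≤ k * ((Prod.fst '' E).encard + (Prod.snd '' E).encard) +
            ((Prod.fst '' E).encard + (Prod.snd '' E).encard) := by
          gcongr
          refine remaining.trans ?_
          gcongr <;> exact nonextremalEdges_subset E
      _ = (k + 1 : ℕ) * ((Prod.fst '' E).encard + (Prod.snd '' E).encard) := by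
          rw [Nat.cast_succ, add_one_mul]

/-- Let `k ≥ 2` and let `G = (U, V, E)` be a path-restricted ordered bipartite graph in
which every forward path has at most `k` edges (i.e. at most `k + 1` vertices).  Then `G`
has at most `k·(|U| + |V|)` edges. -/
theorem prbg_bounded_path_length_edges {α β : Type*} [LinearOrder α] [LinearOrder β]
    [Fintype α] [Fintype β] (E : Set (α × β)) (hG : IsPRBG E) (k : ℕ) (hk : 2 ≤ k)
    (hpath : ∀ ws : List (α ⊕ β), IsForwardPath E ws → ws.length ≤ k + 1) :
    E.ncard ≤ k * (Fintype.card α + Fintype.card β) := by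
  have bound := prbg_bounded_path_length_edges_general E k fun ws hws => hpath ws hws.isForwardPath
  grw [Set.encard_le_card, Set.encard_le_card, ENat.card_eq_coe_fintype_card,
    ENat.card_eq_coe_fintype_card, ← E.toFinite.cast_ncard_eq] at bound
  exact_mod_cast bound
end

section
/- Let P be a set of n points in convex position in the Euclidean plane and let p, q ∈ P be antipodal points, i.e., there exist two distinct parallel lines, one through p and one through q, such that all points of P lie in the closed strip between them. Then the number of pairs {a, b} ⊆ P at Euclidean distance exactly 1 such that a and b lie strictly on the same side of the line through p and q is at most 2n. -/
/-- A finite set of points in the plane is in convex position if every point of the set is an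
extreme point of its convex hull. -/
def ConvexPosition (P : Set (EuclideanSpace ℝ (Fin 2))) : Prop :=
  ∀ p ∈ P, p ∈ (convexHull ℝ P).extremePoints ℝ

/-- `p` and `q` are antipodal points of `P`: there are two distinct parallel lines, one
through `p` and one through `q`, with all of `P` in the closed strip between them.
Equivalently, some linear functional separates: it takes different values at `p` and `q`,
and on all of `P` its values lie between its values at `p` and at `q`. -/
def Antipodal (P : Set (EuclideanSpace ℝ (Fin 2))) (p q : EuclideanSpace ℝ (Fin 2)) :
    Prop :=
  ∃ g : EuclideanSpace ℝ (Fin 2) →ₗ[ℝ] ℝ, g p ≠ g q ∧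
    ∀ x ∈ P, min (g p) (g q) ≤ g x ∧ g x ≤ max (g p) (g q)

/-!
Let `x` be a linear functional that is bounded on `P` by its values at `p` and `q`, and let `y` be a
linear functional whose level sets are the lines parallel to `pq`. Convex position forces the points
of `P` strictly above the chord to form a *cap*: sorted by `x`, they make only right turns.

In a cap there are no `a'`, `a`, `b`, `b'` in this order with `a'b`, `ab`, `ab'` all of the same
length: the isosceles triangles `a'ab` and `abb'` have acute angles at `a` and `b`, so the path
`a'abb'` turns by more than a right angle at each of `a` and `b`, yet the total turning of an
`x`-monotone path is less than two right angles. Hence each edge is the last one leaving its left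
endpoint or the first one entering its right endpoint, and a cap with `m` points has at most `2m`
edges. The points below the chord form a cap for `-y`.
-/

open Module Set
open scoped Finset

section OrderedEdges

variable {α β ι κ : Type*} [LinearOrder ι] [LinearOrder κ]

lemma card_le_card_add_card_of_no_zigzag {S : Finset α} {T : Finset β} {A : Finset (α × β)}
    (hAST : A ⊆ S ×ˢ T) {f : α → ι} {g : β → κ} (hf : InjOn f S) (hg : InjOn g T)
    (hA : ∀ a' a b b', (a', b) ∈ A → (a, b) ∈ A → (a, b') ∈ A → f a' < f a → ¬g b < g b') :
    #A ≤ #S + #T := by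
  classical
  let NotLast (e : α × β) : Prop := ∃ b', (e.1, b') ∈ A ∧ g e.2 < g b'
  have fst_mem {e : α × β} (he : e ∈ A) : e.1 ∈ S := (Finset.mem_product.1 (hAST he)).1
  have snd_mem {e : α × β} (he : e ∈ A) : e.2 ∈ T := (Finset.mem_product.1 (hAST he)).2
  have card_notLast : #{e ∈ A | NotLast e} ≤ #T := by
    refine Finset.card_le_card_of_injOn Prod.snd
      (fun e he => snd_mem (Finset.mem_filter.1 he).1) ?_
    rintro ⟨a₁, b⟩ h₁ ⟨a₂, b'⟩ h₂ hb
    obtain rfl : b = b' := hb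
    obtain ⟨h₁, b₁, hb₁, hlt₁⟩ := Finset.mem_filter.1 h₁
    obtain ⟨h₂, b₂, hb₂, hlt₂⟩ := Finset.mem_filter.1 h₂
    have hle₁ : f a₁ ≤ f a₂ := not_lt.1 fun h => hA _ _ _ _ h₂ h₁ hb₁ h hlt₁
    have hle₂ : f a₂ ≤ f a₁ := not_lt.1 fun h => hA _ _ _ _ h₁ h₂ hb₂ h hlt₂
    exact Prod.ext (hf (fst_mem h₁) (fst_mem h₂) (hle₁.antisymm hle₂)) rfl
  have card_last : #{e ∈ A | ¬NotLast e} ≤ #S := by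
    refine Finset.card_le_card_of_injOn Prod.fst
      (fun e he => fst_mem (Finset.mem_filter.1 he).1) ?_
    rintro ⟨a, b₁⟩ h₁ ⟨a', b₂⟩ h₂ ha
    obtain rfl : a = a' := ha
    obtain ⟨h₁, hlast₁⟩ := Finset.mem_filter.1 h₁
    obtain ⟨h₂, hlast₂⟩ := Finset.mem_filter.1 h₂
    have hle₁ : g b₁ ≤ g b₂ := not_lt.1 fun h => hlast₂ ⟨b₁, h₁, h⟩
    have hle₂ : g b₂ ≤ g b₁ := not_lt.1 fun h => hlast₁ ⟨b₂, h₂, h⟩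
    exact Prod.ext rfl (hg (snd_mem h₁) (snd_mem h₂) (hle₁.antisymm hle₂))
  rw [← Finset.card_filter_add_card_filter_not NotLast, add_comm]
  exact add_le_add card_last card_notLast

lemma card_filter_lt_add_card_filter_gt_le (S : Finset α) (f : α → ι) (t : ι) :
    #{a ∈ S | t < f a} + #{a ∈ S | f a < t} ≤ #S := by
  rw [← Finset.card_filter_add_card_filter_not (s := S) (t < f ·)]
  gcongr with a
  exact fun h => h.le.not_gt

end OrderedEdges

section PlaneCoordinates

variable {𝕜 V : Type*} [Field 𝕜] [AddCommGroup V] [Module 𝕜 V]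

lemma injective_prod_neg {x y : V →ₗ[𝕜] 𝕜} (hxy : Function.Injective (x.prod y)) :
    Function.Injective (x.prod (-y)) := by
  intro a b hab
  have hx : x a = x b := congrArg Prod.fst hab
  have hy : -y a = -y b := congrArg Prod.snd hab
  exact hxy (Prod.ext hx (neg_injective hy))

lemma exists_ker_eq_span_singleton (hV : finrank 𝕜 V = 2) {v : V} (hv : v ≠ 0) :
    ∃ y : V →ₗ[𝕜] 𝕜, y.ker = 𝕜 ∙ v := by
  have : FiniteDimensional 𝕜 V := .of_finrank_pos (by lia)
  have hquot : finrank 𝕜 (V ⧸ 𝕜 ∙ v) = finrank 𝕜 𝕜 := by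
    have := (𝕜 ∙ v).finrank_quotient_add_finrank
    rw [finrank_span_singleton hv, hV] at this
    rw [finrank_self]
    lia
  exact ⟨(LinearEquiv.ofFinrankEq _ _ hquot).toLinearMap ∘ₗ (𝕜 ∙ v).mkQ, by simp⟩

lemma injective_prod_of_ker_eq_span_singleton {x y : V →ₗ[𝕜] 𝕜} {v : V} (hxv : x v ≠ 0)
    (hy : y.ker = 𝕜 ∙ v) : Function.Injective (x.prod y) := by
  refine LinearMap.ker_eq_bot.1 (Submodule.eq_bot_iff _ |>.2 fun u hu => ?_)
  rw [LinearMap.ker_prod, hy, Submodule.mem_inf, LinearMap.mem_ker,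
    Submodule.mem_span_singleton] at hu
  obtain ⟨hxu, c, rfl⟩ := hu
  have hc : c = 0 := by simpa [hxv] using hxu
  rw [hc, zero_smul]

lemma mul_pos_of_sSameSide [LinearOrder 𝕜] [IsStrictOrderedRing 𝕜] {s : AffineSubspace 𝕜 V}
    {y : V →ₗ[𝕜] 𝕜} (hy : y.ker = s.direction) {p a b : V} (hp : p ∈ s) (h : s.SSameSide a b) :
    0 < (y a - y p) * (y b - y p) := by
  have mem_iff (c : V) : c ∈ s ↔ y c - y p = 0 := by
    rw [← AffineSubspace.vsub_right_mem_direction_iff_mem hp, ← hy, LinearMap.mem_ker,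
      vsub_eq_sub, map_sub]
  obtain ⟨⟨p₁, hp₁, p₂, hp₂, hray⟩, ha, hb⟩ := h
  rw [mem_iff] at ha hb
  have hray' : SameRay 𝕜 (y a - y p) (y b - y p) := by
    simpa [sub_eq_zero.1 ((mem_iff p₁).1 hp₁), sub_eq_zero.1 ((mem_iff p₂).1 hp₂)]
      using hray.map y
  obtain ⟨c, hc, hab⟩ := hray'.exists_pos_left ha hb
  rw [← hab, smul_eq_mul, mul_left_comm]
  exact mul_pos hc (mul_self_pos.2 ha)

end PlaneCoordinates

section Cap

variable {𝕜 E : Type*} [Field 𝕜] [LinearOrder 𝕜] [IsStrictOrderedRing 𝕜]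
  [AddCommGroup E] [Module 𝕜 E] {x y : E →ₗ[𝕜] 𝕜}

/-- A cap in the sense of Erdős and Szekeres, with respect to the coordinates `x` (horizontal) and
`y` (vertical): no point of `S` lies on or below a segment joining two other points of `S`. Taking
`a = c` in the definition shows that no two points of `S` have the same `x`-coordinate. -/
def IsCap (x y : E →ₗ[𝕜] 𝕜) (S : Set E) : Prop :=
  ∀ ⦃a⦄, a ∈ S → ∀ ⦃b⦄, b ∈ S → ∀ ⦃c⦄, c ∈ S → ∀ ⦃d⦄, d ∈ segment 𝕜 a c →
    x d = x b → y b ≤ y d → b = a ∨ b = c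

lemma exists_mem_segment_apply_eq {p q : E} {t : 𝕜} (ht : t ∈ uIcc (x p) (x q)) :
    ∃ e ∈ segment 𝕜 p q, x e = t := by
  rwa [← segment_eq_uIcc, ← LinearMap.coe_toAffineMap, ← image_segment] at ht

lemma apply_eq_of_mem_segment {p q e : E} (hpq : y p = y q) (he : e ∈ segment 𝕜 p q) :
    y e = y p := by
  have : y e ∈ segment 𝕜 (y p) (y q) := by
    rw [← LinearMap.coe_toAffineMap, ← image_segment]
    exact mem_image_of_mem _ he
  rwa [← hpq, segment_same] at this

lemma mem_segment_of_apply_eq (hxy : Function.Injective (x.prod y)) {b d e : E}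
    (hxe : x e = x b) (hxd : x d = x b) (hye : y e ≤ y b) (hyd : y b ≤ y d) :
    b ∈ segment 𝕜 e d := by
  obtain ⟨b', hb', hy⟩ := exists_mem_segment_apply_eq (mem_uIcc_of_le hye hyd)
  have hx : x b' = x b := (apply_eq_of_mem_segment (hxe.trans hxd.symm) hb').trans hxe
  rwa [← hxy (Prod.ext hx hy : x.prod y b' = x.prod y b)]

theorem isCap_setOf_lt (hxy : Function.Injective (x.prod y)) {P : Set E}
    (hP : P ⊆ (convexHull 𝕜 P).extremePoints 𝕜) {p q : E} (hp : p ∈ convexHull 𝕜 P)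
    (hq : q ∈ convexHull 𝕜 P) (hx : ∀ a ∈ P, x a ∈ uIcc (x p) (x q)) (hy : y p = y q) :
    IsCap x y {a ∈ P | y p < y a} := by
  rintro a ⟨ha, -⟩ b ⟨hb, hpb⟩ c ⟨hc, -⟩ d hd hxd hbd
  have eq_or_eq_of_mem_segment := (mem_extremePoints_iff_forall_segment.1 (hP hb)).2
  have hull_convex := convex_convexHull 𝕜 P
  have ha' := subset_convexHull 𝕜 P ha
  have hc' := subset_convexHull 𝕜 P hc
  obtain ⟨e, he, hxe⟩ := exists_mem_segment_apply_eq (hx b hb)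
  have hye : y e < y b := (apply_eq_of_mem_segment hy he).trans_lt hpb
  have hb_mem : b ∈ segment 𝕜 e d := mem_segment_of_apply_eq hxy hxe hxd hye.le hbd
  obtain rfl : d = b := (eq_or_eq_of_mem_segment e (hull_convex.segment_subset hp hq he) d
    (hull_convex.segment_subset ha' hc' hd) hb_mem).resolve_left (by rintro rfl; exact hye.false)
  exact (eq_or_eq_of_mem_segment a ha' c hc' hd).imp Eq.symm Eq.symm

namespace IsCap

variable {S : Set E}

lemma injOn (hS : IsCap x y S) : InjOn x S := by
  intro a ha b hb hab
  rcases le_total (y b) (y a) with h | h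
  · exact (or_self_iff.1 (hS ha hb ha (left_mem_segment 𝕜 a a) hab h)).symm
  · exact or_self_iff.1 (hS hb ha hb (left_mem_segment 𝕜 b b) hab.symm h)

lemma right_turn (hS : IsCap x y S) {a b c : E} (ha : a ∈ S) (hb : b ∈ S) (hc : c ∈ S)
    (hab : x a < x b) (hbc : x b < x c) :
    y (c - b) * x (b - a) < y (b - a) * x (c - b) := by
  obtain ⟨d, hd, hxd⟩ := exists_mem_segment_apply_eq (mem_uIcc_of_le hab.le hbc.le)
  have hyd : y d < y b := by
    by_contra! h
    rcases hS ha hb hc hd hxd h with rfl | rfl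
    exacts [hab.false, hbc.false]
  obtain ⟨s, t, -, -, hst, rfl⟩ := hd
  simp only [map_add, map_sub, map_smul, smul_eq_mul] at hxd hyd ⊢
  obtain rfl : s = 1 - t := by linarith
  have hleft : x b - x a = t * (x c - x a) := by linarith
  have hright : x c - x b = (1 - t) * (x c - x a) := by linarith
  rw [hleft, hright]
  nlinarith [mul_pos (sub_pos.2 (hab.trans hbc)) (sub_pos.2 hyd)]

end IsCap

-- Cramer's rule, with the signs of the minors read off from the slopes `y / x`.
lemma exists_pos_combination_of_slope_lt (hxy : Function.Injective (x.prod y)) {u v w : E}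
    (hu : 0 < x u) (hv : 0 < x v) (hw : 0 < x w)
    (huv : y v * x u < y u * x v) (hvw : y w * x v < y v * x w) :
    ∃ s t : 𝕜, 0 < s ∧ 0 < t ∧ v = s • u + t • w := by
  have hdet : 0 < y u * x w - y w * x u := by
    refine pos_of_mul_pos_left (b := x v) ?_ hv.le
    nlinarith [mul_pos (sub_pos.2 huv) hw, mul_pos (sub_pos.2 hvw) hu]
  refine ⟨(y v * x w - y w * x v) / (y u * x w - y w * x u),
    (y u * x v - y v * x u) / (y u * x w - y w * x u),
    div_pos (sub_pos.2 hvw) hdet, div_pos (sub_pos.2 huv) hdet, hxy (Prod.ext ?_ ?_)⟩ <;>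
  · simp only [LinearMap.prod_apply, Function.prod_apply, map_add, map_smul, Prod.fst_add,
      Prod.snd_add, Prod.smul_fst, Prod.smul_snd, smul_eq_mul]
    rw [div_mul_eq_mul_div, div_mul_eq_mul_div, ← add_div, eq_div_iff hdet.ne']
    ring

end Cap

section Distances

variable {E : Type*} [NormedAddCommGroup E] [InnerProductSpace ℝ E] {x y : E →ₗ[ℝ] ℝ}

lemma inner_sub_sub_neg_of_dist_eq {a a' b : E} (hne : a' ≠ a) (h : dist a' b = dist a b) :
    inner ℝ (a - a') (b - a) < 0 := by
  have hsq := norm_add_sq_real (a - a') (b - a)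
  have hpos : 0 < ‖a - a'‖ ^ 2 := by
    have := norm_pos_iff.2 (sub_ne_zero.2 hne.symm)
    positivity
  rw [sub_add_sub_cancel', ← dist_eq_norm b a', ← dist_eq_norm b a, dist_comm b a', dist_comm b a,
    h] at hsq
  linarith

namespace IsCap

lemma dist_ne_of_zigzag (hxy : Function.Injective (x.prod y)) {S : Set E} (hS : IsCap x y S)
    {a' a b b' : E} (ha' : a' ∈ S) (ha : a ∈ S) (hb : b ∈ S) (hb' : b' ∈ S)
    (haa : x a' < x a) (hab : x a < x b) (hbb : x b < x b') (hleft : dist a' b = dist a b) :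
    dist a b' ≠ dist a b := by
  intro hright
  obtain ⟨s, t, hs, ht, hcomb⟩ := exists_pos_combination_of_slope_lt hxy
    (u := a - a') (v := b - a) (w := b' - b)
    (by simpa using haa) (by simpa using hab) (by simpa using hbb)
    (hS.right_turn ha' ha hb haa hab) (hS.right_turn ha hb hb' hab hbb)
  have acute_a : inner ℝ (a - a') (b - a) < 0 :=
    inner_sub_sub_neg_of_dist_eq (ne_of_apply_ne x haa.ne) hleft
  have acute_b : inner ℝ (b' - b) (b - a) < 0 := by
    rw [← inner_neg_neg, neg_sub, neg_sub]
    exact inner_sub_sub_neg_of_dist_eq (ne_of_apply_ne x hbb.ne')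
      (by rw [dist_comm b', dist_comm b, hright])
  have hneg : inner ℝ (b - a) (b - a) < 0 :=
    calc inner ℝ (b - a) (b - a)
        = s * inner ℝ (a - a') (b - a) + t * inner ℝ (b' - b) (b - a) := by
          conv_lhs => rw [hcomb]
          rw [inner_add_left, real_inner_smul_left, real_inner_smul_left, ← hcomb]
      _ < 0 := add_neg (mul_neg_of_pos_of_neg hs acute_a) (mul_neg_of_pos_of_neg ht acute_b)
  exact real_inner_self_nonneg.not_gt hneg

variable {S : Finset E}

lemma card_dist_eq_and_lt_le (hxy : Function.Injective (x.prod y)) (hS : IsCap x y S) (r : ℝ) :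
    #{e ∈ S ×ˢ S | dist e.1 e.2 = r ∧ x e.1 < x e.2} ≤ 2 * #S := by
  rw [two_mul]
  refine card_le_card_add_card_of_no_zigzag (Finset.filter_subset _ _) hS.injOn hS.injOn ?_
  simp only [Finset.mem_filter, Finset.mem_product]
  rintro a' a b b' ⟨⟨ha', -⟩, hr', -⟩ ⟨⟨ha, hb⟩, hr, hab⟩ ⟨⟨-, hb'⟩, hr'', -⟩ haa hbb
  exact hS.dist_ne_of_zigzag hxy ha' ha hb hb' haa hab hbb (hr'.trans hr.symm) (hr''.trans hr.symm)

theorem card_dist_eq_le (hxy : Function.Injective (x.prod y)) (hS : IsCap x y S) {r : ℝ}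
    (hr : r ≠ 0) : #{e ∈ S ×ˢ S | dist e.1 e.2 = r} ≤ 2 * (2 * #S) := by
  classical
  set A : Finset (E × E) := {e ∈ S ×ˢ S | dist e.1 e.2 = r ∧ x e.1 < x e.2} with hA
  have hsub : {e ∈ S ×ˢ S | dist e.1 e.2 = r} ⊆ A ∪ A.image Prod.swap := by
    rintro ⟨a, b⟩ h
    simp only [Finset.mem_filter, Finset.mem_product] at h
    obtain ⟨⟨ha, hb⟩, hab⟩ := h
    have hne : a ≠ b := dist_ne_zero.1 (hab ▸ hr)
    rcases (hS.injOn.ne ha hb hne).lt_or_gt with hlt | hgt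
    · simp [hA, ha, hb, hab, hlt]
    · simp [hA, ha, hb, dist_comm b a, hab, hgt]
  calc #{e ∈ S ×ˢ S | dist e.1 e.2 = r}
      ≤ #A + #(A.image Prod.swap) := (Finset.card_le_card hsub).trans (Finset.card_union_le _ _)
    _ ≤ #A + #A := Nat.add_le_add_left Finset.card_image_le _
    _ ≤ 2 * (2 * #S) := by rw [← two_mul]; gcongr; exact hS.card_dist_eq_and_lt_le hxy r

end IsCap

end Distances

section Chord

variable {E : Type*} [NormedAddCommGroup E] [InnerProductSpace ℝ E]

lemma ncard_dist_eq_and_same_sign_le {x y : E →ₗ[ℝ] ℝ} (hxy : Function.Injective (x.prod y))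
    {P : Finset E} (hP : (P : Set E) ⊆ (convexHull ℝ (P : Set E)).extremePoints ℝ) {p q : E}
    (hp : p ∈ convexHull ℝ (P : Set E)) (hq : q ∈ convexHull ℝ (P : Set E))
    (hx : ∀ a ∈ P, x a ∈ uIcc (x p) (x q)) (hy : y p = y q) {r : ℝ} (hr : r ≠ 0) :
    {e : E × E | e.1 ∈ P ∧ e.2 ∈ P ∧ dist e.1 e.2 = r ∧
      0 < (y e.1 - y p) * (y e.2 - y p)}.ncard ≤ 2 * (2 * #P) := by
  classical
  set above : Finset E := {a ∈ P | y p < y a} with habove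
  set below : Finset E := {a ∈ P | y a < y p} with hbelow
  have above_cap : IsCap x y above := by
    simpa [habove] using isCap_setOf_lt hxy hP hp hq hx hy
  have hxy' := injective_prod_neg hxy
  have below_cap : IsCap x (-y) below := by
    simpa [hbelow] using isCap_setOf_lt hxy' hP hp hq hx (by simpa using hy)
  let equidistant (S : Finset E) : Finset (E × E) := {e ∈ S ×ˢ S | dist e.1 e.2 = r}
  have hsub : {e : E × E | e.1 ∈ P ∧ e.2 ∈ P ∧ dist e.1 e.2 = r ∧
      0 < (y e.1 - y p) * (y e.2 - y p)} ⊆ ↑(equidistant above ∪ equidistant below) := by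
    rintro ⟨a, b⟩ ⟨ha, hb, hab, hsign⟩
    simp only [mul_pos_iff, sub_pos, sub_neg] at ha hb hab hsign
    simpa [equidistant, habove, hbelow, ha, hb, hab] using hsign
  calc _ ≤ #(equidistant above ∪ equidistant below) := by
          rw [← Set.ncard_coe_finset]
          exact Set.ncard_le_ncard hsub (Finset.finite_toSet _)
    _ ≤ #(equidistant above) + #(equidistant below) := Finset.card_union_le _ _
    _ ≤ 2 * (2 * #above) + 2 * (2 * #below) :=
        add_le_add (above_cap.card_dist_eq_le hxy hr) (below_cap.card_dist_eq_le hxy' hr)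
    _ ≤ 2 * (2 * #P) := by have := card_filter_lt_add_card_filter_gt_le P y (y p); lia

theorem unit_distances_not_crossing_antipodal_chord_general (hE : finrank ℝ E = 2) {P : Finset E}
    (hP : (P : Set E) ⊆ (convexHull ℝ (P : Set E)).extremePoints ℝ) {p q : E}
    (hp : p ∈ convexHull ℝ (P : Set E)) (hq : q ∈ convexHull ℝ (P : Set E)) {x : E →ₗ[ℝ] ℝ}
    (hpq : x p ≠ x q) (hx : ∀ a ∈ P, x a ∈ uIcc (x p) (x q)) {r : ℝ} (hr : r ≠ 0) :
    {e : E × E | e.1 ∈ P ∧ e.2 ∈ P ∧ dist e.1 e.2 = r ∧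
      (affineSpan ℝ {p, q}).SSameSide e.1 e.2}.ncard ≤ 2 * (2 * #P) := by
  have hxpq : x (p - q) ≠ 0 := by rwa [map_sub, sub_ne_zero]
  have hne : p - q ≠ 0 := ne_of_apply_ne x (by rwa [map_zero])
  obtain ⟨y, hy⟩ := exists_ker_eq_span_singleton hE hne
  have hypq : y p = y q := by
    rw [← sub_eq_zero, ← map_sub, ← LinearMap.mem_ker, hy]
    exact Submodule.mem_span_singleton_self _
  have hdir : y.ker = (affineSpan ℝ {p, q}).direction := by
    rw [hy, direction_affineSpan, vectorSpan_pair, vsub_eq_sub]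
  refine (Set.ncard_le_ncard ?_ ?_).trans (ncard_dist_eq_and_same_sign_le
    (injective_prod_of_ker_eq_span_singleton hxpq hy) hP hp hq hx hypq hr)
  · rintro e ⟨ha, hb, hab, hside⟩
    exact ⟨ha, hb, hab, mul_pos_of_sSameSide hdir (left_mem_affineSpan_pair ℝ p q) hside⟩
  · exact (P ×ˢ P).finite_toSet.subset fun e he => Finset.mem_product.2 ⟨he.1, he.2.1⟩

end Chord

/-- Let `P` be a set of `n` points in convex position in the plane and `p, q ∈ P` antipodal
points.  Then the number of pairs `{a, b} ⊆ P` at distance exactly `1` lying strictly on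
the same side of the line through `p` and `q` is at most `2n`.  (Ordered pairs count each
unordered pair twice, whence the extra factor `2`.) -/
theorem unit_distances_not_crossing_antipodal_chord
    (P : Finset (EuclideanSpace ℝ (Fin 2)))
    (hconv : ConvexPosition (P : Set (EuclideanSpace ℝ (Fin 2))))
    (p q : EuclideanSpace ℝ (Fin 2)) (hp : p ∈ P) (hq : q ∈ P) (hpq : p ≠ q)
    (hanti : Antipodal (P : Set (EuclideanSpace ℝ (Fin 2))) p q) :
    ({e : EuclideanSpace ℝ (Fin 2) × EuclideanSpace ℝ (Fin 2) |
        e.1 ∈ P ∧ e.2 ∈ P ∧ dist e.1 e.2 = 1 ∧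
        AffineSubspace.SSameSide (affineSpan ℝ {p, q}) e.1 e.2}.ncard : ℕ) ≤
      2 * (2 * P.card) := by
  obtain ⟨x, hx, hstrip⟩ := hanti
  exact unit_distances_not_crossing_antipodal_chord_general finrank_euclideanSpace_fin
    (fun a => hconv a) (subset_convexHull ℝ _ hp) (subset_convexHull ℝ _ hq) hx hstrip one_ne_zero
end
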